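/- arXiv:0910.5728 — 7 statements merged into one kernel-verified Lean document; each statement's English description precedes it below -/
import Mathlib

section
/- Let n ≥ 1 and let H : ℝⁿ × ℝⁿ → ℝ be a smooth function that is ℤⁿ-periodic in its first argument and bounded below. Define the Hamiltonian H̄ : ℝⁿ⁺¹ × ℝⁿ⁺¹ → ℝ by H̄((x,t),(p,q)) = H(x,p) + q²/2 (where we write points of ℝⁿ⁺¹ as pairs consisting of a vector in ℝⁿ and a real number); H̄ is ℤⁿ⁺¹-periodic in its first argument and bounded below. Then the strict Mañé critical values coincide: c₀(H̄) = c₀(H). -/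
/-!
Let `P : ℝⁿ⁺¹ → ℝⁿ` forget the last coordinate and let `J = P†` be the inclusion `x ↦ (x, 0)`.
A closed 1-form `c + du` on `𝕋ⁿ` pulls back along `P` to a form without `dt` component, so on it
`H̄` takes exactly the values that `H` takes on `c + du`. Conversely, a closed 1-form on `𝕋ⁿ⁺¹`
restricts to the slice `t = 0`, and there discarding `q² / 2 ≥ 0` only lowers the Hamiltonian. Hence
each value whose infimum defines one of the two critical values dominates a value for the other.
Compactness of the torus makes the suprema finite.
-/

open scoped ContDiff

/-- The strict Mañé critical value of a Hamiltonian `H : ℝᵐ × ℝᵐ → ℝ` that is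
`ℤᵐ`-periodic in its first argument and bounded below: the infimum, over all
`c ∈ ℝᵐ` and all smooth `ℤᵐ`-periodic functions `u : ℝᵐ → ℝ`, of
`sup_x H (x, c + ∇u(x))`. -/
noncomputable def strictManeCritical (m : ℕ)
    (H : EuclideanSpace ℝ (Fin m) × EuclideanSpace ℝ (Fin m) → ℝ) : ℝ :=
  sInf { y : ℝ | ∃ (c : EuclideanSpace ℝ (Fin m)) (u : EuclideanSpace ℝ (Fin m) → ℝ),
    ContDiff ℝ ∞ u ∧
    (∀ (x : EuclideanSpace ℝ (Fin m)) (k : Fin m → ℤ),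
      u (x + (EuclideanSpace.equiv (Fin m) ℝ).symm (fun i => (k i : ℝ))) = u x) ∧
    y = ⨆ x : EuclideanSpace ℝ (Fin m), H (x, c + gradient u x) }

/-- The suspended Hamiltonian `H̄((x,t),(p,q)) = H(x,p) + q²/2` on `ℝⁿ⁺¹ × ℝⁿ⁺¹`,
where the last coordinate of the base is `t` and the last coordinate of the momentum
is `q`. -/
noncomputable def suspendedHam (n : ℕ)
    (H : EuclideanSpace ℝ (Fin n) × EuclideanSpace ℝ (Fin n) → ℝ) :
    EuclideanSpace ℝ (Fin (n + 1)) × EuclideanSpace ℝ (Fin (n + 1)) → ℝ :=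
  fun q =>
    H ((EuclideanSpace.equiv (Fin n) ℝ).symm (fun i => q.1 i.castSucc),
       (EuclideanSpace.equiv (Fin n) ℝ).symm (fun i => q.2 i.castSucc)) +
    (q.2 (Fin.last n)) ^ 2 / 2

open ContinuousLinearMap
open scoped InnerProduct

section Gradient

variable {𝕜 E F : Type*} [RCLike 𝕜] [NormedAddCommGroup E] [InnerProductSpace 𝕜 E] [CompleteSpace E]
  [NormedAddCommGroup F] [InnerProductSpace 𝕜 F] [CompleteSpace F]

lemma gradient_comp_continuousLinearMap (A : E →L[𝕜] F) {f : F → 𝕜} {x : E}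
    (hf : DifferentiableAt 𝕜 f (A x)) :
    gradient (f ∘ A) x = (A†) (gradient f (A x)) := by
  refine ext_inner_right 𝕜 fun v ↦ ?_
  rw [inner_gradient_left, adjoint_inner_left, inner_gradient_left,
    (hf.hasFDerivAt.comp x A.hasFDerivAt).fderiv, comp_apply]

lemma gradient_periodic {f : E → 𝕜} {a : E} (hf : Function.Periodic f a) :
    Function.Periodic (gradient f) a := fun x ↦ by
  simp only [gradient, ← fderiv_comp_add_right, hf.funext]

lemma continuous_gradient {f : E → 𝕜} (hf : ContDiff 𝕜 1 f) : Continuous (gradient f) :=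
  (InnerProductSpace.toDual 𝕜 E).symm.continuous.comp (hf.continuous_fderiv one_ne_zero)

end Gradient

section LatticePeriodic

variable {ι κ α : Type*}

/-- The vector of the lattice `ℤ^ι ⊆ ℝ^ι` with coordinates `k`. -/
noncomputable def latticeVec (k : ι → ℤ) : EuclideanSpace ℝ ι :=
  (EuclideanSpace.equiv ι ℝ).symm fun i ↦ (k i : ℝ)

@[simp] lemma latticeVec_apply (k : ι → ℤ) (i : ι) : latticeVec k i = k i := rfl

/-- `ℤ^ι`-periodicity of a function on `ℝ^ι`: such functions are those that descend to the torus
`𝕋^ι`. -/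
def IsLatticePeriodic (f : EuclideanSpace ℝ ι → α) : Prop :=
  ∀ (x : EuclideanSpace ℝ ι) (k : ι → ℤ), f (x + latticeVec k) = f x

namespace IsLatticePeriodic

lemma comp_continuousLinearMap {f : EuclideanSpace ℝ κ → α} (hf : IsLatticePeriodic f)
    {A : EuclideanSpace ℝ ι →L[ℝ] EuclideanSpace ℝ κ}
    (hA : ∀ k, ∃ l, A (latticeVec k) = latticeVec l) : IsLatticePeriodic (f ∘ A) := fun x k ↦ by
  obtain ⟨l, hl⟩ := hA k
  simp only [Function.comp_apply, map_add, hl, hf _ l]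

lemma image_unitCube_eq_range {f : EuclideanSpace ℝ ι → α} (hf : IsLatticePeriodic f) :
    f '' ((EuclideanSpace.equiv ι ℝ).symm '' Set.Icc 0 1) = Set.range f := by
  refine (Set.image_subset_range _ _).antisymm ?_
  rintro _ ⟨x, rfl⟩
  let fractPart : EuclideanSpace ℝ ι := (EuclideanSpace.equiv ι ℝ).symm fun i ↦ Int.fract (x i)
  have hx : fractPart + latticeVec (fun i ↦ ⌊x i⌋) = x := by
    ext i
    exact Int.fract_add_floor (x i)
  refine ⟨fractPart, ⟨_, ⟨fun i ↦ Int.fract_nonneg _, fun i ↦ (Int.fract_lt_one _).le⟩, rfl⟩, ?_⟩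
  rw [← hf fractPart, hx]

lemma isCompact_range [TopologicalSpace α] {f : EuclideanSpace ℝ ι → α} (hf : IsLatticePeriodic f)
    (hcont : Continuous f) : IsCompact (Set.range f) :=
  hf.image_unitCube_eq_range ▸
    (isCompact_Icc.image (EuclideanSpace.equiv ι ℝ).symm.continuous).image hcont

end IsLatticePeriodic

end LatticePeriodic

/-- The function `x ↦ H(x, c + ∇u(x))`, that is, the Hamiltonian `H` evaluated along the closed
1-form `c + du`. -/
noncomputable def hamAlong {E : Type*} [NormedAddCommGroup E] [InnerProductSpace ℝ E]
    [CompleteSpace E] (H : E × E → ℝ) (c : E) (u : E → ℝ) (x : E) : ℝ :=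
  H (x, c + gradient u x)

lemma bddAbove_range_hamAlong {ι : Type*} [Fintype ι]
    {H : EuclideanSpace ℝ ι × EuclideanSpace ℝ ι → ℝ} (hH : Continuous H)
    (hHper : ∀ p, IsLatticePeriodic fun x ↦ H (x, p)) (c : EuclideanSpace ℝ ι)
    {u : EuclideanSpace ℝ ι → ℝ} (hu : ContDiff ℝ 1 u) (huper : IsLatticePeriodic u) :
    BddAbove (Set.range (hamAlong H c u)) := by
  have hcont : Continuous (hamAlong H c u) :=
    hH.comp (continuous_id.prodMk (continuous_const.add (continuous_gradient hu)))
  have hper : IsLatticePeriodic (hamAlong H c u) := fun x k ↦ by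
    simp only [hamAlong, gradient_periodic (fun y ↦ huper y k) x, hHper _ x k]
  exact (hper.isCompact_range hcont).bddAbove

section Suspension

variable (n : ℕ)

/-- The projection `P : ℝⁿ⁺¹ → ℝⁿ`, `(x, t) ↦ x`. -/
noncomputable def baseProj : EuclideanSpace ℝ (Fin (n + 1)) →L[ℝ] EuclideanSpace ℝ (Fin n) :=
  ((EuclideanSpace.equiv (Fin n) ℝ).symm : (Fin n → ℝ) →L[ℝ] EuclideanSpace ℝ (Fin n)) ∘L
    .pi fun i ↦ EuclideanSpace.proj i.castSucc

/-- The inclusion `J : ℝⁿ → ℝⁿ⁺¹`, `x ↦ (x, 0)`, of the slice `t = 0`. -/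
noncomputable def sliceIncl : EuclideanSpace ℝ (Fin n) →L[ℝ] EuclideanSpace ℝ (Fin (n + 1)) :=
  ((EuclideanSpace.equiv (Fin (n + 1)) ℝ).symm :
      (Fin (n + 1) → ℝ) →L[ℝ] EuclideanSpace ℝ (Fin (n + 1))) ∘L
    .pi (Fin.snoc (α := fun _ ↦ EuclideanSpace ℝ (Fin n) →L[ℝ] ℝ) EuclideanSpace.proj 0)

variable {n}

@[simp] lemma baseProj_apply (z : EuclideanSpace ℝ (Fin (n + 1))) (i : Fin n) :
    baseProj n z i = z i.castSucc := rfl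

@[simp] lemma sliceIncl_castSucc (x : EuclideanSpace ℝ (Fin n)) (i : Fin n) :
    sliceIncl n x i.castSucc = x i := by
  simp [sliceIncl]

@[simp] lemma sliceIncl_last (x : EuclideanSpace ℝ (Fin n)) :
    sliceIncl n x (Fin.last n) = 0 := by
  simp [sliceIncl]

@[simp] lemma baseProj_sliceIncl (x : EuclideanSpace ℝ (Fin n)) :
    baseProj n (sliceIncl n x) = x := by
  ext i
  simp

lemma baseProj_surjective : Function.Surjective (baseProj n) :=
  Function.LeftInverse.surjective baseProj_sliceIncl

lemma adjoint_baseProj : (baseProj n)† = sliceIncl n := by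
  refine ((eq_adjoint_iff _ _).2 fun x z ↦ ?_).symm
  simp [PiLp.inner_apply, Fin.sum_univ_castSucc]

lemma adjoint_sliceIncl : (sliceIncl n)† = baseProj n := by
  rw [← adjoint_baseProj, adjoint_adjoint]

lemma baseProj_latticeVec (k : Fin (n + 1) → ℤ) :
    baseProj n (latticeVec k) = latticeVec (Fin.init k) := rfl

lemma sliceIncl_latticeVec (k : Fin n → ℤ) :
    sliceIncl n (latticeVec k) = latticeVec (Fin.snoc (α := fun _ ↦ ℤ) k 0) := by
  ext i
  cases i using Fin.lastCases <;> simp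

variable {H : EuclideanSpace ℝ (Fin n) × EuclideanSpace ℝ (Fin n) → ℝ}

lemma suspendedHam_apply (z w : EuclideanSpace ℝ (Fin (n + 1))) :
    suspendedHam n H (z, w) = H (baseProj n z, baseProj n w) + w (Fin.last n) ^ 2 / 2 := rfl

lemma continuous_suspendedHam (hH : Continuous H) : Continuous (suspendedHam n H) := by
  have : Continuous fun q : EuclideanSpace ℝ (Fin (n + 1)) × EuclideanSpace ℝ (Fin (n + 1)) ↦
      H (baseProj n q.1, baseProj n q.2) + q.2 (Fin.last n) ^ 2 / 2 := by
    fun_prop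
  exact this

lemma isLatticePeriodic_suspendedHam (hH : ∀ p, IsLatticePeriodic fun x ↦ H (x, p))
    (w : EuclideanSpace ℝ (Fin (n + 1))) :
    IsLatticePeriodic fun z ↦ suspendedHam n H (z, w) := fun z k ↦ by
  simp only [suspendedHam_apply, map_add, baseProj_latticeVec, hH _ (baseProj n z)]

lemma hamAlong_suspendedHam_comp_baseProj (c : EuclideanSpace ℝ (Fin n))
    {u : EuclideanSpace ℝ (Fin n) → ℝ} (hu : Differentiable ℝ u) :
    hamAlong (suspendedHam n H) (sliceIncl n c) (u ∘ baseProj n) = hamAlong H c u ∘ baseProj n := by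
  ext z
  simp only [hamAlong, Function.comp_apply, gradient_comp_continuousLinearMap _ (hu _),
    adjoint_baseProj, ← map_add, suspendedHam_apply, baseProj_sliceIncl, sliceIncl_last]
  ring

lemma hamAlong_comp_sliceIncl_le (c : EuclideanSpace ℝ (Fin (n + 1)))
    {u : EuclideanSpace ℝ (Fin (n + 1)) → ℝ} (hu : Differentiable ℝ u)
    (x : EuclideanSpace ℝ (Fin n)) :
    hamAlong H (baseProj n c) (u ∘ sliceIncl n) x ≤
      hamAlong (suspendedHam n H) c u (sliceIncl n x) := by
  simp only [hamAlong, gradient_comp_continuousLinearMap _ (hu _), adjoint_sliceIncl, ← map_add,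
    suspendedHam_apply, baseProj_sliceIncl]
  exact le_add_of_nonneg_right (by positivity)

lemma iSup_hamAlong_suspendedHam_comp_baseProj (c : EuclideanSpace ℝ (Fin n))
    {u : EuclideanSpace ℝ (Fin n) → ℝ} (hu : Differentiable ℝ u) :
    ⨆ z, hamAlong (suspendedHam n H) (sliceIncl n c) (u ∘ baseProj n) z =
      ⨆ x, hamAlong H c u x := by
  rw [hamAlong_suspendedHam_comp_baseProj c hu]
  exact baseProj_surjective.iSup_comp _

lemma iSup_hamAlong_comp_sliceIncl_le (hH : Continuous H)
    (hHper : ∀ p, IsLatticePeriodic fun x ↦ H (x, p)) (c : EuclideanSpace ℝ (Fin (n + 1)))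
    {u : EuclideanSpace ℝ (Fin (n + 1)) → ℝ} (hu : ContDiff ℝ 1 u) (huper : IsLatticePeriodic u) :
    ⨆ x, hamAlong H (baseProj n c) (u ∘ sliceIncl n) x ≤
      ⨆ z, hamAlong (suspendedHam n H) c u z := by
  have hbdd : BddAbove (Set.range (hamAlong (suspendedHam n H) c u)) :=
    bddAbove_range_hamAlong (continuous_suspendedHam hH) (isLatticePeriodic_suspendedHam hHper)
      c hu huper
  exact ciSup_le fun x ↦
    (hamAlong_comp_sliceIncl_le c (hu.differentiable one_ne_zero) x).trans
      (le_ciSup hbdd (sliceIncl n x))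

-- Where the critical values are `-∞`, both sides are the junk value `0` of `sInf`.
theorem strictManeCritical_suspendedHam_general (hH : Continuous H)
    (hHper : ∀ p, IsLatticePeriodic fun x ↦ H (x, p)) :
    strictManeCritical (n + 1) (suspendedHam n H) = strictManeCritical n H := by
  refine csInf_eq_csInf_of_forall_exists_le ?_ ?_
  · rintro _ ⟨c, u, hu, huper, rfl⟩
    exact ⟨_, ⟨baseProj n c, u ∘ sliceIncl n, hu.comp (sliceIncl n).contDiff,
      IsLatticePeriodic.comp_continuousLinearMap huper fun k ↦ ⟨_, sliceIncl_latticeVec k⟩, rfl⟩,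
      iSup_hamAlong_comp_sliceIncl_le hH hHper c (hu.of_le (by simp)) huper⟩
  · rintro _ ⟨c, u, hu, huper, rfl⟩
    exact ⟨_, ⟨sliceIncl n c, u ∘ baseProj n, hu.comp (baseProj n).contDiff,
      IsLatticePeriodic.comp_continuousLinearMap huper fun k ↦ ⟨_, baseProj_latticeVec k⟩, rfl⟩,
      (iSup_hamAlong_suspendedHam_comp_baseProj c (hu.differentiable (by simp))).le⟩

end Suspension

/-- Lemma 2.2 of the paper: the strict Mañé critical value is unchanged by the
convex suspension `H̄((x,t),(p,q)) = H(x,p) + q²/2`, i.e. `c₀(H̄) = c₀(H)`. -/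
theorem strictManeCritical_suspendedHam (n : ℕ) (hn : 1 ≤ n)
    (H : EuclideanSpace ℝ (Fin n) × EuclideanSpace ℝ (Fin n) → ℝ)
    (hsmooth : ContDiff ℝ ∞ H)
    (hper : ∀ (x p : EuclideanSpace ℝ (Fin n)) (k : Fin n → ℤ),
      H (x + (EuclideanSpace.equiv (Fin n) ℝ).symm (fun i => (k i : ℝ)), p) = H (x, p))
    (hbdd : BddBelow (Set.range H)) :
    strictManeCritical (n + 1) (suspendedHam n H) = strictManeCritical n H :=
  strictManeCritical_suspendedHam_general hsmooth.continuous fun p x k ↦ hper x p k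
end

section
/- Let ε > 0 and let f : ℝ → ℝ be a smooth function that is even, satisfies f(s) ≥ 0 for all s, f(s) = 1 for |s| ≤ ε/2, f(s) = 0 for |s| ≥ ε, and f'(s) ≤ 0 for all s ≥ 0. Let r : ℝ → ℝ be a continuous, even function with r(s) > 0 for all s. Let q : ℝ → ℝ be the continuous function defined by q(u) = r(u)f'(u)/u for u ≠ 0 and q(0) = 0, and define g : ℝ → ℝ by g(s) := −∫₀ˢ q(u) du. Then f(s)·r(s) + g(s)·s > 0 for every s ∈ ℝ. -/
open scoped ContDiff

/-!
The function `q` is nonpositive away from `0`, so `g s * s` is nonnegative, and `f s * r s` alone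
is positive unless `f s = 0`. In that case `f` has dropped from `f 0 > 0` to `0`. If `g s * s`
vanished, then `q`, and with it `f'`, would vanish almost everywhere between `0` and `s`, and the
fundamental theorem of calculus would give `f s = f 0`.
-/

open MeasureTheory Set
open scoped Interval

section IntervalIntegral

variable {μ : Measure ℝ} {p : ℝ → ℝ} {a b : ℝ}

theorem sub_mul_intervalIntegral_eq_abs_mul_integral_uIoc :
    (b - a) * ∫ x in a..b, p x ∂μ = |b - a| * ∫ x in Ι a b, p x ∂μ := by
  rcases le_or_gt a b with hab | hba
  · rw [intervalIntegral.integral_of_le hab, uIoc_of_le hab, abs_of_nonneg (sub_nonneg.mpr hab)]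
  · rw [intervalIntegral.integral_of_ge hba.le, uIoc_of_ge hba.le, abs_of_neg (sub_neg.mpr hba),
      mul_neg, neg_mul]

theorem sub_mul_intervalIntegral_nonneg (hp : 0 ≤ᵐ[μ.restrict (Ι a b)] p) :
    0 ≤ (b - a) * ∫ x in a..b, p x ∂μ := by
  rw [sub_mul_intervalIntegral_eq_abs_mul_integral_uIoc]
  exact mul_nonneg (abs_nonneg _) (integral_nonneg_of_ae hp)

theorem sub_mul_intervalIntegral_pos (hp : 0 ≤ᵐ[μ.restrict (Ι a b)] p)
    (hp_int : IntervalIntegrable p μ a b) (hp_ne : ¬ p =ᵐ[μ.restrict (Ι a b)] 0) :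
    0 < (b - a) * ∫ x in a..b, p x ∂μ := by
  have hab : b - a ≠ 0 := by
    intro h
    obtain rfl : b = a := sub_eq_zero.mp h
    exact hp_ne (by simp [Filter.EventuallyEq])
  have h_int : ∫ x in Ι a b, p x ∂μ ≠ 0 :=
    mt (integral_eq_zero_iff_of_nonneg_ae hp hp_int.def').mp hp_ne
  rw [sub_mul_intervalIntegral_eq_abs_mul_integral_uIoc]
  exact mul_pos (abs_pos.mpr hab) ((integral_nonneg_of_ae hp).lt_of_ne' h_int)

end IntervalIntegral

theorem eq_of_deriv_ae_eq_zero {E : Type*} [NormedAddCommGroup E] [NormedSpace ℝ E]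
    [CompleteSpace E] {f : ℝ → E} {a b : ℝ} (hf : ∀ x ∈ [[a, b]], DifferentiableAt ℝ f x)
    (hf' : deriv f =ᵐ[volume.restrict (Ι a b)] 0) : f a = f b := by
  have h_int : IntervalIntegrable (deriv f) volume a b :=
    intervalIntegrable_const.congr_ae hf'.symm
  have h_ftc : ∫ x in a..b, deriv f x = f b - f a :=
    intervalIntegral.integral_deriv_eq_sub hf h_int
  rw [intervalIntegral.integral_congr_ae_restrict hf'] at h_ftc
  simpa [eq_comm, sub_eq_zero] using h_ftc

theorem mul_deriv_nonpos_of_even {f : ℝ → ℝ} (hf_even : f.Even)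
    (hf' : ∀ s, 0 ≤ s → deriv f s ≤ 0) (s : ℝ) : s * deriv f s ≤ 0 := by
  rcases le_total 0 s with hs | hs
  · exact mul_nonpos_of_nonneg_of_nonpos hs (hf' s hs)
  · have h_odd : deriv f s = -deriv f (-s) := by
      rw [← deriv_comp_neg, funext hf_even]
    rw [h_odd, ← neg_mul_comm]
    exact mul_nonpos_of_nonneg_of_nonpos (neg_nonneg.mpr hs) (hf' _ (neg_nonneg.mpr hs))

theorem stabilizing_form_positive_general {f r q g : ℝ → ℝ} (hf : Differentiable ℝ f)
    (hf_nonneg : ∀ s, 0 ≤ f s) (hf_zero : 0 < f 0) (hf' : ∀ s, s * deriv f s ≤ 0)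
    (hr_pos : ∀ s, 0 < r s) (hq_int : ∀ s, IntervalIntegrable q volume 0 s)
    (hq : ∀ u, u ≠ 0 → q u = r u * deriv f u / u) (hg : ∀ s, g s = -∫ u in (0 : ℝ)..s, q u)
    (s : ℝ) : 0 < f s * r s + g s * s := by
  have hne : ∀ᵐ u ∂volume.restrict (Ι 0 s), u ≠ 0 := Measure.ae_ne _ 0
  have hq_nonpos : 0 ≤ᵐ[volume.restrict (Ι 0 s)] -q := by
    filter_upwards [hne] with u hu
    have hq_eq : q u = r u * (u * deriv f u) / u ^ 2 := by rw [hq u hu]; field_simp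
    rw [Pi.neg_apply, Pi.zero_apply, neg_nonneg, hq_eq]
    exact div_nonpos_of_nonpos_of_nonneg
      (mul_nonpos_of_nonneg_of_nonpos (hr_pos u).le (hf' u)) (sq_nonneg u)
  have hgs : g s * s = (s - 0) * ∫ u in (0 : ℝ)..s, (-q) u := by
    simp only [hg, Pi.neg_apply, intervalIntegral.integral_neg, sub_zero, mul_comm]
  rw [hgs]
  rcases (hf_nonneg s).eq_or_lt with hfs | hfs
  · rw [← hfs, zero_mul, zero_add]
    refine sub_mul_intervalIntegral_pos hq_nonpos (hq_int s).neg fun hq_zero ↦ ?_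
    have hf'_zero : deriv f =ᵐ[volume.restrict (Ι 0 s)] 0 := by
      filter_upwards [hne, hq_zero] with u hu hqu
      simpa [hq u hu, hu, (hr_pos u).ne'] using hqu
    exact hf_zero.ne' ((eq_of_deriv_ae_eq_zero (fun x _ ↦ hf x) hf'_zero).trans hfs.symm)
  · exact add_pos_of_pos_of_nonneg (mul_pos hfs (hr_pos s))
      (sub_mul_intervalIntegral_nonneg hq_nonpos)

/-- The key positivity in Proposition 2.3 of the paper: with `f` a smooth even bump
function (`f ≡ 1` near `0`, `f ≡ 0` outside `(-ε,ε)`, `f ≥ 0`, `f' ≤ 0` on `[0,∞)`),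
`r` continuous, even and positive, and `g(s) = -∫₀ˢ r(u)f'(u)/u du`, one has
`f(s)·r(s) + g(s)·s > 0` for every `s`, which shows that the stabilizing 1-form
`λ = f(p_t)π*α + g(p_t)dt` satisfies `λ(X_H̄) > 0`. -/
theorem stabilizing_form_positive (ε : ℝ) (hε : 0 < ε)
    (f : ℝ → ℝ) (hf : ContDiff ℝ ∞ f)
    (hfeven : ∀ s : ℝ, f (-s) = f s)
    (hfnonneg : ∀ s : ℝ, 0 ≤ f s)
    (hfone : ∀ s : ℝ, |s| ≤ ε / 2 → f s = 1)
    (hfzero : ∀ s : ℝ, ε ≤ |s| → f s = 0)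
    (hf' : ∀ s : ℝ, 0 ≤ s → deriv f s ≤ 0)
    (r : ℝ → ℝ) (hr : Continuous r)
    (hreven : ∀ s : ℝ, r (-s) = r s)
    (hrpos : ∀ s : ℝ, 0 < r s)
    (q : ℝ → ℝ) (hq : Continuous q)
    (hq0 : q 0 = 0) (hqe : ∀ u : ℝ, u ≠ 0 → q u = r u * deriv f u / u)
    (g : ℝ → ℝ) (hg : ∀ s : ℝ, g s = -∫ u in (0 : ℝ)..s, q u) :
    ∀ s : ℝ, 0 < f s * r s + g s * s := by
  have hf0 : f 0 = 1 := hfone 0 (by simp [(half_pos hε).le])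
  exact stabilizing_form_positive_general (hf.differentiable (by simp)) hfnonneg
    (hf0 ▸ one_pos) (mul_deriv_nonpos_of_even hfeven hf') hrpos (hq.intervalIntegrable 0) hqe hg
end

section
/- Let X be a topological space and let constants 0 < δ₁ < δ < ε₂ < ε₁ < ε and c₀, c₁ ∈ ℝ with ε₂ < c₀ < ε₁ and δ₁ < c₁ < δ be given. Let f : X × (−δ,δ) → ℝ be continuous, differentiable in the second variable with ∂_r f(x,r) > 0 for all (x,r), and satisfying |f(x,r)| ≤ ε₂ for all (x,r). Let α, β₀, β₁ : ℝ → ℝ be smooth functions such that: α is even, α(r) = 0 for 0 ≤ r ≤ δ₁, α(r) = 1 for r ≥ ε₁, and α'(r) > 0 for δ₁ < r < ε₁; β₀ is odd, β₀'(r) ≥ 0 for all r, β₀(r) = c₀ for δ₁ ≤ r ≤ ε₂, and β₀(r) = r for r ≥ ε₁; β₁ is odd, β₁'(r) ≥ 0 for all r, β₁(r) = r for 0 ≤ r ≤ δ₁, β₁'(r) > 0 for 0 ≤ r < δ, and β₁(r) = c₁ for r ≥ δ. Define g : X × (−ε,ε) → ℝ by g(x,r) := α(r)β₀(r) + (1 −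 α(r)) f(x, β₁(r)) (well-defined since |β₁(r)| ≤ c₁ < δ). Then: (i) g(x,r) = f(x,r) whenever |r| ≤ δ₁; (ii) g(x,r) = r whenever ε₁ ≤ |r| < ε; (iii) g is differentiable in r with ∂_r g(x,r) > 0 for every (x,r) ∈ X × (−ε,ε). -/
/-!
On `|r| ≤ δ₁` the interpolation agrees with `f(x,·)`, and on `|r| ≥ ε₁` with the identity; since it
is differentiable everywhere, its derivative there is forced, also at the endpoints, where a
one-sided derivative suffices. In the transition zone `δ₁ < |r| < ε₁`,
`∂_r g = α' (β₀ - f(β₁)) + (1 - α) β₁' ∂_r f(β₁) + α β₀'`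
has last two terms nonnegative, and the first is positive because `α'` and `β₀` are odd and
`|β₀| > ε₂ ≥ |f|`, so that both its factors have the sign of `r`.
-/

open scoped ContDiff

open Set

section EvenOdd

variable {G : Type*} [AddGroup G] [LinearOrder G]

theorem even_apply_abs {β : Type*} {f : G → β} (hf : f.Even) (r : G) : f |r| = f r := by
  rcases abs_choice r with h | h <;> rw [h]
  exact hf r

theorem eq_self_of_odd_of_apply_abs {f : G → G} (hf : f.Odd) {r : G} (h : f |r| = |r|) :
    f r = r := by
  rcases abs_choice r with hr | hr <;> rw [hr] at h
  · exact h
  · exact neg_injective ((hf r).symm.trans h)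

theorem abs_apply_le_of_odd_of_monotone {H : Type*} [AddGroup H] [LinearOrder H]
    {f : G → H} (hodd : f.Odd) (hmono : Monotone f) {a : G} {c : H}
    (hc : ∀ r, a ≤ r → f r ≤ c) (r : G) : |f r| ≤ c := by
  have hle (s : G) : f s ≤ c := (hmono (le_max_left s a)).trans (hc _ (le_max_right s a))
  exact abs_le'.2 ⟨hle r, hodd r ▸ hle (-r)⟩

theorem mul_sub_pos_of_odd {R : Type*} [Ring R] [LinearOrder R] [IsStrictOrderedRing R]
    {p q : G → R} (hp : p.Odd) (hq : q.Odd) {r : G} {y : R}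
    (hpr : 0 < p |r|) (hqr : |y| < q |r|) : 0 < p r * (q r - y) := by
  rcases abs_choice r with hr | hr <;> rw [hr] at hpr hqr
  · exact mul_pos hpr (sub_pos.2 (lt_of_abs_lt hqr))
  · rw [hp r] at hpr
    rw [hq r] at hqr
    have hqy : q r < y := neg_lt_neg_iff.1 ((neg_le_abs y).trans_lt hqr)
    exact mul_pos_of_neg_of_neg (neg_pos.1 hpr) (sub_neg.2 hqy)

end EvenOdd

section Deriv

variable {𝕜 F : Type*} [NontriviallyNormedField 𝕜] [NormedAddCommGroup F] [NormedSpace 𝕜 F]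

theorem deriv_odd_of_even {f : 𝕜 → F} (hf : f.Even) : (deriv f).Odd := fun r => by
  rw [← neg_eq_iff_eq_neg, ← deriv_comp_neg, funext hf]

theorem hasDerivAt_of_eqOn {f g : 𝕜 → F} {f' : F} {s : Set 𝕜} {x : 𝕜}
    (hs : UniqueDiffWithinAt 𝕜 s x) (hx : x ∈ s) (hfg : EqOn g f s)
    (hg : DifferentiableAt 𝕜 g x) (hf : HasDerivAt f f' x) : HasDerivAt g f' x := by
  have hderiv : deriv g x = f' :=
    hs.eq_deriv s hg.hasDerivAt.hasDerivWithinAt (hf.hasDerivWithinAt.congr hfg (hfg hx))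
  exact hderiv ▸ hg.hasDerivAt

theorem uniqueDiffOn_setOf_le_abs (a : ℝ) : UniqueDiffOn ℝ {r : ℝ | a ≤ |r|} := by
  intro r (hr : a ≤ |r|)
  rcases le_total 0 r with h | h
  · exact (uniqueDiffWithinAt_Ici r).mono fun s hs => hr.trans (abs_le_abs_of_nonneg h hs)
  · exact (uniqueDiffWithinAt_Iic r).mono fun s hs => hr.trans (abs_le_abs_of_nonpos h hs)

end Deriv

/-- The slice `g(x,·)` of the interpolated family, built from the slice `φ = f(x,·)`: the cutoff `α`
passes from `φ ∘ β₁` to `β₀`. -/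
def interpolation {R : Type*} [Ring R] (α β₀ β₁ φ : R → R) (r : R) : R :=
  α r * β₀ r + (1 - α r) * φ (β₁ r)

namespace interpolation

section Ring

variable {R : Type*} [Ring R] [LinearOrder R] {a b : R} {α β₀ β₁ φ : R → R}

theorem apply_of_abs_le [IsOrderedAddMonoid R] (hα : α.Even)
    (hα0 : ∀ r, 0 ≤ r → r ≤ a → α r = 0) (hβ₁ : β₁.Odd)
    (hβ₁id : ∀ r, 0 ≤ r → r ≤ a → β₁ r = r) {r : R} (hr : |r| ≤ a) :
    interpolation α β₀ β₁ φ r = φ r := by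
  have hαr : α r = 0 := even_apply_abs hα r ▸ hα0 _ (abs_nonneg r) hr
  have hβ₁r : β₁ r = r := eq_self_of_odd_of_apply_abs hβ₁ (hβ₁id _ (abs_nonneg r) hr)
  simp [interpolation, hαr, hβ₁r]

theorem apply_of_le_abs (hα : α.Even) (hα1 : ∀ r, b ≤ r → α r = 1) (hβ₀ : β₀.Odd)
    (hβ₀id : ∀ r, b ≤ r → β₀ r = r) {r : R} (hr : b ≤ |r|) :
    interpolation α β₀ β₁ φ r = r := by
  have hαr : α r = 1 := even_apply_abs hα r ▸ hα1 _ hr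
  have hβ₀r : β₀ r = r := eq_self_of_odd_of_apply_abs hβ₀ (hβ₀id _ hr)
  simp [interpolation, hαr, hβ₀r]

end Ring

theorem hasDerivAt {𝕜 : Type*} [NontriviallyNormedField 𝕜] {α β₀ β₁ φ : 𝕜 → 𝕜} {φ' r : 𝕜}
    (hα : DifferentiableAt 𝕜 α r) (hβ₀ : DifferentiableAt 𝕜 β₀ r)
    (hβ₁ : DifferentiableAt 𝕜 β₁ r) (hφ : HasDerivAt φ φ' (β₁ r)) :
    HasDerivAt (interpolation α β₀ β₁ φ)
      (deriv α r * (β₀ r - φ (β₁ r)) + (1 - α r) * (deriv β₁ r * φ') + α r * deriv β₀ r) r := by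
  have hφβ₁ : HasDerivAt (fun t => φ (β₁ t)) (φ' * deriv β₁ r) r := hφ.comp r hβ₁.hasDerivAt
  refine ((hα.hasDerivAt.mul hβ₀.hasDerivAt).add
    ((hα.hasDerivAt.const_sub 1).mul hφβ₁)).congr_deriv ?_
  ring

theorem derivFormula_pos {a b y φ' r : ℝ} {α β₀ β₁ : ℝ → ℝ}
    (hαdiff : Differentiable ℝ α) (hα : α.Even) (hαa : α a = 0) (hαb : α b = 1)
    (hα' : ∀ r, a < r → r < b → 0 < deriv α r)
    (hβ₀ : β₀.Odd) (hβ₀mono : Monotone β₀) (hβ₁' : 0 ≤ deriv β₁ r) (hφ' : 0 ≤ φ')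
    (hy : |y| < β₀ a) (har : a < |r|) (hrb : |r| < b) :
    0 < deriv α r * (β₀ r - y) + (1 - α r) * (deriv β₁ r * φ') + α r * deriv β₀ r := by
  have hαmono : MonotoneOn α (Icc a b) :=
    (strictMonoOn_of_deriv_pos (convex_Icc a b) hαdiff.continuous.continuousOn
      (by simpa using hα')).monotoneOn
  have hαmem : α r ∈ Icc 0 1 := by
    simpa [even_apply_abs hα, hαa, hαb] using hαmono.mapsTo_Icc ⟨har.le, hrb.le⟩
  have hleading : 0 < deriv α r * (β₀ r - y) :=
    mul_sub_pos_of_odd (deriv_odd_of_even hα) hβ₀ (hα' _ har hrb) (hy.trans_le (hβ₀mono har.le))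
  have hmiddle : 0 ≤ (1 - α r) * (deriv β₁ r * φ') :=
    mul_nonneg (sub_nonneg.2 hαmem.2) (mul_nonneg hβ₁' hφ')
  have hlast : 0 ≤ α r * deriv β₀ r := mul_nonneg hαmem.1 hβ₀mono.deriv_nonneg
  linarith

end interpolation

theorem interpolation_monotone_family_general {X : Type*} {δ₁ δ ε₂ ε₁ : ℝ}
    {f f' : X → ℝ → ℝ} {α β₀ β₁ : ℝ → ℝ} (hδ₁ : 0 < δ₁)
    (hfdiff : ∀ x, ∀ r ∈ Ioo (-δ) δ, HasDerivAt (f x) (f' x r) r)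
    (hf'pos : ∀ x, ∀ r ∈ Ioo (-δ) δ, 0 < f' x r)
    (hfbdd : ∀ x, ∀ r ∈ Ioo (-δ) δ, |f x r| ≤ ε₂)
    (hα : Differentiable ℝ α) (hβ₀ : Differentiable ℝ β₀) (hβ₁ : Differentiable ℝ β₁)
    (hαeven : α.Even) (hα0 : ∀ r, 0 ≤ r → r ≤ δ₁ → α r = 0) (hα1 : ∀ r, ε₁ ≤ r → α r = 1)
    (hα' : ∀ r, δ₁ < r → r < ε₁ → 0 < deriv α r)
    (hβ₀odd : β₀.Odd) (hβ₀' : ∀ r, 0 ≤ deriv β₀ r)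
    (hβ₀δ₁ : ε₂ < β₀ δ₁) (hβ₀id : ∀ r, ε₁ ≤ r → β₀ r = r)
    (hβ₁odd : β₁.Odd) (hβ₁' : ∀ r, 0 ≤ deriv β₁ r)
    (hβ₁id : ∀ r, 0 ≤ r → r ≤ δ₁ → β₁ r = r) (hβ₁lt : ∀ r, |β₁ r| < δ) :
    (∀ x r, |r| ≤ δ₁ → interpolation α β₀ β₁ (f x) r = f x r) ∧
    (∀ x r, ε₁ ≤ |r| → interpolation α β₀ β₁ (f x) r = r) ∧
    ∀ x r, ∃ d, HasDerivAt (interpolation α β₀ β₁ (f x)) d r ∧ 0 < d := by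
  have hinner (x : X) (r : ℝ) (hr : |r| ≤ δ₁) : interpolation α β₀ β₁ (f x) r = f x r :=
    interpolation.apply_of_abs_le hαeven hα0 hβ₁odd hβ₁id hr
  have houter (x : X) (r : ℝ) (hr : ε₁ ≤ |r|) : interpolation α β₀ β₁ (f x) r = r :=
    interpolation.apply_of_le_abs hαeven hα1 hβ₀odd hβ₀id hr
  refine ⟨hinner, houter, fun x r => ?_⟩
  have hβ₁mem : β₁ r ∈ Ioo (-δ) δ := abs_lt.1 (hβ₁lt r)
  have hderiv := interpolation.hasDerivAt (hα r) (hβ₀ r) (hβ₁ r) (hfdiff x _ hβ₁mem)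
  rcases le_or_gt |r| δ₁ with hr | hδ₁r
  · have hβ₁r : β₁ r = r := eq_self_of_odd_of_apply_abs hβ₁odd (hβ₁id _ (abs_nonneg r) hr)
    rw [hβ₁r] at hβ₁mem
    exact ⟨f' x r, hasDerivAt_of_eqOn (uniqueDiffOn_Icc (neg_lt_self hδ₁) r (abs_le.1 hr))
      (abs_le.1 hr) (fun s hs => hinner x s (abs_le.2 hs)) hderiv.differentiableAt
      (hfdiff x r hβ₁mem), hf'pos x r hβ₁mem⟩
  rcases le_or_gt ε₁ |r| with hr | hrε₁
  · exact ⟨1, hasDerivAt_of_eqOn (uniqueDiffOn_setOf_le_abs ε₁ r hr) hr (houter x)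
      hderiv.differentiableAt (hasDerivAt_id r), one_pos⟩
  · exact ⟨_, hderiv, interpolation.derivFormula_pos hα hαeven (hα0 δ₁ hδ₁.le le_rfl)
      (hα1 ε₁ le_rfl) hα' hβ₀odd (monotone_of_deriv_nonneg hβ₀ hβ₀') (hβ₁' r)
      (hf'pos x _ hβ₁mem).le ((hfbdd x _ hβ₁mem).trans_lt hβ₀δ₁) hδ₁r hrε₁⟩

/-- The interpolation construction in the proof of Lemma 2.1 of the paper:
`g(x,r) = α(r)β₀(r) + (1-α(r))f(x,β₁(r))` coincides with `f` for `|r| ≤ δ₁`,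
with `r` for `ε₁ ≤ |r| < ε`, and is strictly increasing in `r` throughout. -/
theorem interpolation_monotone_family
    (X : Type*) [TopologicalSpace X]
    (δ₁ δ ε₂ ε₁ ε c₀ c₁ : ℝ)
    (h0 : 0 < δ₁) (h1 : δ₁ < δ) (h2 : δ < ε₂) (h3 : ε₂ < ε₁) (h4 : ε₁ < ε)
    (hc0 : ε₂ < c₀ ∧ c₀ < ε₁) (hc1 : δ₁ < c₁ ∧ c₁ < δ)
    (f f' : X → ℝ → ℝ)
    (hfcont : ContinuousOn (fun p : X × ℝ => f p.1 p.2) (Set.univ ×ˢ Set.Ioo (-δ) δ))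
    (hfdiff : ∀ (x : X), ∀ r ∈ Set.Ioo (-δ) δ, HasDerivAt (f x) (f' x r) r)
    (hf'pos : ∀ (x : X), ∀ r ∈ Set.Ioo (-δ) δ, 0 < f' x r)
    (hfbdd : ∀ (x : X), ∀ r ∈ Set.Ioo (-δ) δ, |f x r| ≤ ε₂)
    (α β₀ β₁ : ℝ → ℝ)
    (hα : ContDiff ℝ ∞ α) (hβ₀ : ContDiff ℝ ∞ β₀) (hβ₁ : ContDiff ℝ ∞ β₁)
    (hαeven : ∀ r : ℝ, α (-r) = α r)
    (hα0 : ∀ r : ℝ, 0 ≤ r → r ≤ δ₁ → α r = 0)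
    (hα1 : ∀ r : ℝ, ε₁ ≤ r → α r = 1)
    (hα' : ∀ r : ℝ, δ₁ < r → r < ε₁ → 0 < deriv α r)
    (hβ₀odd : ∀ r : ℝ, β₀ (-r) = -β₀ r)
    (hβ₀' : ∀ r : ℝ, 0 ≤ deriv β₀ r)
    (hβ₀const : ∀ r : ℝ, δ₁ ≤ r → r ≤ ε₂ → β₀ r = c₀)
    (hβ₀id : ∀ r : ℝ, ε₁ ≤ r → β₀ r = r)
    (hβ₁odd : ∀ r : ℝ, β₁ (-r) = -β₁ r)
    (hβ₁' : ∀ r : ℝ, 0 ≤ deriv β₁ r)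
    (hβ₁id : ∀ r : ℝ, 0 ≤ r → r ≤ δ₁ → β₁ r = r)
    (hβ₁'pos : ∀ r : ℝ, 0 ≤ r → r < δ → 0 < deriv β₁ r)
    (hβ₁const : ∀ r : ℝ, δ ≤ r → β₁ r = c₁)
    (g : X → ℝ → ℝ)
    (hg : ∀ (x : X) (r : ℝ), g x r = α r * β₀ r + (1 - α r) * f x (β₁ r)) :
    (∀ (x : X) (r : ℝ), |r| ≤ δ₁ → g x r = f x r) ∧
    (∀ (x : X) (r : ℝ), ε₁ ≤ |r| → |r| < ε → g x r = r) ∧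
    (∀ (x : X), ∀ r ∈ Set.Ioo (-ε) ε, ∃ d : ℝ, HasDerivAt (g x) d r ∧ 0 < d) := by
  obtain rfl : g = fun x => interpolation α β₀ β₁ (f x) := funext₂ hg
  have hβ₁le : ∀ r, |β₁ r| ≤ c₁ := abs_apply_le_of_odd_of_monotone hβ₁odd
    (monotone_of_deriv_nonneg (hβ₁.differentiable (by simp)) hβ₁') fun r hr => (hβ₁const r hr).le
  have hβ₀δ₁ : ε₂ < β₀ δ₁ := hβ₀const δ₁ le_rfl (h1.trans h2).le ▸ hc0.1
  obtain ⟨hinner, houter, hpos⟩ := interpolation_monotone_family_general h0 hfdiff hf'pos hfbdd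
    (hα.differentiable (by simp)) (hβ₀.differentiable (by simp)) (hβ₁.differentiable (by simp))
    hαeven hα0 hα1 hα' hβ₀odd hβ₀' hβ₀δ₁ hβ₀id hβ₁odd hβ₁' hβ₁id fun r => (hβ₁le r).trans_lt hc1.2
  exact ⟨hinner, fun x r hr _ => houter x r hr, fun x r _ => hpos x r⟩
end

section
/- Let X be a topological space, let 0 < ε₁ < ε, and let g : X × (−ε,ε) → ℝ be a continuous function such that for each x ∈ X the map r ↦ g(x,r) is strictly increasing, and g(x,r) = r whenever ε₁ ≤ |r| < ε. Then there exists a unique function F : X × (−ε,ε) → (−ε,ε) such that g(x, F(x,r)) = r for all (x,r) ∈ X × (−ε,ε). Moreover F is continuous, for each x the map r ↦ F(x,r) is strictly increasing, and F(x,r) = r whenever ε₁ ≤ |r| < ε. If in addition g is differentiable in its second variable with ∂_r g(x,r) > 0 everywhere, then F is differentiable in its second variable with ∂_r F(x,r) = (∂_r g(x, F(x,r)))⁻¹ > 0. -/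
/-!
Each fiber `g x` fixes `±ε₁`, so the intermediate value theorem on `[-ε₁, ε₁]` makes it an
increasing bijection of `(-ε, ε)`, and `F x` is its inverse. For joint continuity, if `a < F x r`
then `g x a < r`; this strict inequality persists for `(y, q)` near `(x, r)`, because `g · a` is
continuous, and it gives back `a < F y q`. So `F` is lower semicontinuous, and reversing the orders
shows that it is upper semicontinuous as well.
-/

open Function Set Topology

theorem surjOn_self_of_eqOn_id_diff_Ioo {α : Type*} [ConditionallyCompleteLinearOrder α]
    [TopologicalSpace α] [OrderTopology α] [DenselyOrdered α] {f : α → α} {s : Set α} {a b : α}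
    (hf : ContinuousOn f (Icc a b)) (hs : Icc a b ⊆ s) (hid : EqOn f id (s \ Ioo a b)) :
    SurjOn f s s := by
  intro r hr
  by_cases hrab : r ∈ Ioo a b
  · have hab : a ≤ b := (hrab.1.trans hrab.2).le
    have hfa : f a = a := hid ⟨hs (left_mem_Icc.2 hab), fun h => h.1.false⟩
    have hfb : f b = b := hid ⟨hs (right_mem_Icc.2 hab), fun h => h.2.false⟩
    have hivt : Icc a b ⊆ f '' Icc a b := by
      simpa only [hfa, hfb] using intermediate_value_Icc hab hf
    exact image_mono hs (hivt (Ioo_subset_Icc_self hrab))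
  · exact ⟨r, hr, hid ⟨hr, hrab⟩⟩

theorem strictMonoOn_of_rightInvOn_of_mapsTo {α β : Type*} [LinearOrder α] [Preorder β]
    {f : α → β} {f' : β → α} {s : Set α} {t : Set β} (hf : StrictMonoOn f s)
    (hinv : RightInvOn f' f t) (hmaps : MapsTo f' t s) : StrictMonoOn f' t := by
  intro r hr q hq hrq
  rwa [← hf.lt_iff_lt (hmaps hr) (hmaps hq), hinv hr, hinv hq]

section FiberwiseRightInverse

variable {X α β : Type*} {g : X → α → β} {F : X → β → α} {s : Set α} {t : Set β}
  [TopologicalSpace X] [LinearOrder α] [LinearOrder β] [TopologicalSpace β]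
  [OrderClosedTopology β]

theorem lowerSemicontinuousOn_uncurry_of_rightInvOn (hs : s.OrdConnected)
    (hcont : ∀ a ∈ s, Continuous (g · a)) (hmono : ∀ x, StrictMonoOn (g x) s)
    (hmaps : ∀ x, MapsTo (F x) t s) (hinv : ∀ x, RightInvOn (F x) (g x) t) :
    LowerSemicontinuousOn (uncurry F) (univ ×ˢ t) := by
  rintro ⟨x, r⟩ ⟨-, hr⟩ a (ha : a < F x r)
  by_cases has : a ∈ s
  · have hlt : g x a < r := (hmono x has (hmaps x hr) ha).trans_eq (hinv x hr)
    have hopen : IsOpen {p : X × β | g p.1 a < p.2} :=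
      isOpen_lt ((hcont a has).comp continuous_fst) continuous_snd
    filter_upwards [self_mem_nhdsWithin, mem_nhdsWithin_of_mem_nhds (hopen.mem_nhds hlt)]
      with ⟨y, q⟩ ⟨_, hq⟩ (hyq : g y a < q)
    exact ((hmono y).lt_iff_lt has (hmaps y hq)).1 (hyq.trans_eq (hinv y hq).symm)
  -- Otherwise `a` is a lower bound of the order-connected set `s`.
  · filter_upwards [self_mem_nhdsWithin] with ⟨y, q⟩ ⟨_, hq⟩
    exact lt_of_not_ge fun hle => has (hs.out (hmaps y hq) (hmaps x hr) ⟨hle, ha.le⟩)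

theorem upperSemicontinuousOn_uncurry_of_rightInvOn (hs : s.OrdConnected)
    (hcont : ∀ a ∈ s, Continuous (g · a)) (hmono : ∀ x, StrictMonoOn (g x) s)
    (hmaps : ∀ x, MapsTo (F x) t s) (hinv : ∀ x, RightInvOn (F x) (g x) t) :
    UpperSemicontinuousOn (uncurry F) (univ ×ˢ t) :=
  lowerSemicontinuousOn_uncurry_of_rightInvOn (α := αᵒᵈ) (β := βᵒᵈ) hs.dual hcont
    (fun x => (hmono x).dual) hmaps hinv

theorem continuousOn_uncurry_of_rightInvOn [TopologicalSpace α] [OrderTopology α]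
    (hs : s.OrdConnected) (hcont : ∀ a ∈ s, Continuous (g · a))
    (hmono : ∀ x, StrictMonoOn (g x) s) (hmaps : ∀ x, MapsTo (F x) t s)
    (hinv : ∀ x, RightInvOn (F x) (g x) t) : ContinuousOn (uncurry F) (univ ×ˢ t) :=
  continuousOn_iff_lower_upperSemicontinuousOn.2
    ⟨lowerSemicontinuousOn_uncurry_of_rightInvOn hs hcont hmono hmaps hinv,
      upperSemicontinuousOn_uncurry_of_rightInvOn hs hcont hmono hmaps hinv⟩

end FiberwiseRightInverse

/-- The implicit-function step in the proof of Lemma 2.1 of the paper: a continuous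
family `g(x,·)` of strictly increasing functions of `r ∈ (-ε,ε)` which equal the
identity for `ε₁ ≤ |r| < ε` admits a unique fiberwise inverse
`F : X × (-ε,ε) → (-ε,ε)` with `g(x,F(x,r)) = r`; `F` is continuous, strictly
increasing in `r`, equals the identity for `ε₁ ≤ |r| < ε`, and if `g` has positive
derivative `∂_r g` in its second variable then `F` is differentiable in `r` with
`∂_r F(x,r) = (∂_r g(x,F(x,r)))⁻¹ > 0`. -/
theorem fiberwise_inverse_of_monotone_family
    (X : Type*) [TopologicalSpace X]
    (ε₁ ε : ℝ) (h0 : 0 < ε₁) (h1 : ε₁ < ε)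
    (g g' : X → ℝ → ℝ)
    (hgcont : ContinuousOn (fun p : X × ℝ => g p.1 p.2) (Set.univ ×ˢ Set.Ioo (-ε) ε))
    (hgmono : ∀ x : X, StrictMonoOn (g x) (Set.Ioo (-ε) ε))
    (hgid : ∀ (x : X) (r : ℝ), ε₁ ≤ |r| → |r| < ε → g x r = r) :
    ∃ F : X → ℝ → ℝ,
      (∀ x : X, ∀ r ∈ Set.Ioo (-ε) ε, F x r ∈ Set.Ioo (-ε) ε ∧ g x (F x r) = r) ∧
      (∀ F₂ : X → ℝ → ℝ,
        (∀ x : X, ∀ r ∈ Set.Ioo (-ε) ε, F₂ x r ∈ Set.Ioo (-ε) ε ∧ g x (F₂ x r) = r) →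
        ∀ x : X, ∀ r ∈ Set.Ioo (-ε) ε, F₂ x r = F x r) ∧
      ContinuousOn (fun p : X × ℝ => F p.1 p.2) (Set.univ ×ˢ Set.Ioo (-ε) ε) ∧
      (∀ x : X, StrictMonoOn (F x) (Set.Ioo (-ε) ε)) ∧
      (∀ (x : X) (r : ℝ), ε₁ ≤ |r| → |r| < ε → F x r = r) ∧
      ((∀ x : X, ∀ r ∈ Set.Ioo (-ε) ε, HasDerivAt (g x) (g' x r) r ∧ 0 < g' x r) →
        ∀ x : X, ∀ r ∈ Set.Ioo (-ε) ε,
          HasDerivAt (F x) ((g' x (F x r))⁻¹) r ∧ 0 < (g' x (F x r))⁻¹) := by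
  have hIcc : Icc (-ε₁) ε₁ ⊆ Ioo (-ε) ε := Icc_subset_Ioo (neg_lt_neg h1) h1
  have hsurj (x : X) : SurjOn (g x) (Ioo (-ε) ε) (Ioo (-ε) ε) :=
    surjOn_self_of_eqOn_id_diff_Ioo ((hgcont.uncurry_left x (mem_univ x)).mono hIcc) hIcc
      fun r hr => hgid x r (not_lt.1 fun h => hr.2 (abs_lt.1 h)) (abs_lt.2 hr.1)
  let F (x : X) : ℝ → ℝ := invFunOn (g x) (Ioo (-ε) ε)
  have hmaps (x : X) : MapsTo (F x) (Ioo (-ε) ε) (Ioo (-ε) ε) := (hsurj x).mapsTo_invFunOn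
  have hinv (x : X) : RightInvOn (F x) (g x) (Ioo (-ε) ε) := (hsurj x).rightInvOn_invFunOn
  have hFcont : ContinuousOn (uncurry F) (univ ×ˢ Ioo (-ε) ε) :=
    continuousOn_uncurry_of_rightInvOn ordConnected_Ioo
      (fun a ha => continuousOn_univ.1 (hgcont.uncurry_right a ha)) hgmono hmaps hinv
  refine ⟨F, fun x r hr => ⟨hmaps x hr, hinv x hr⟩, fun F₂ hF₂ x r hr => ?_, hFcont,
    fun x => strictMonoOn_of_rightInvOn_of_mapsTo (hgmono x) (hinv x) (hmaps x),
    fun x r hr₁ hr => ?_, fun hg x r hr => ?_⟩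
  · exact (hgmono x).injOn (hF₂ x r hr).1 (hmaps x hr) ((hF₂ x r hr).2.trans (hinv x hr).symm)
  · have hrI : r ∈ Ioo (-ε) ε := abs_lt.1 hr
    exact (hgmono x).injOn (hmaps x hrI) hrI ((hinv x hrI).trans (hgid x r hr₁ hr).symm)
  · have hI : Ioo (-ε) ε ∈ 𝓝 r := Ioo_mem_nhds hr.1 hr.2
    have hFx : ContinuousAt (F x) r := (hFcont.uncurry_left x (mem_univ x)).continuousAt hI
    obtain ⟨hderiv, hpos⟩ := hg x (F x r) (hmaps x hr)
    exact ⟨hderiv.of_local_left_inverse hFx hpos.ne' (Filter.mem_of_superset hI (hinv x)),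
      inv_pos.2 hpos⟩
end

section
/- Let A be a 2×2 integer matrix, let P be an invertible 2×2 real matrix, and let λ > 1 be a real number such that P·A = D·P, where D = diag(λ, λ⁻¹) and A is regarded as a real matrix. (It follows that det A = 1, so A is invertible over ℤ.) Equip ℤ² × ℤ with the semidirect product multiplication (v,l)·(v',l') := (v + Aˡ v', l + l'), where Aˡ denotes the l-th power of A acting on ℤ² (using the integer inverse of A for negative l). Define ψ : ℤ² × ℤ → ℝ³ by ψ(v,l) := ((P·v)₁, (P·v)₂, l·log λ), where P·v is the image of v under P in ℝ². Then ψ is an injective group homomorphism from ℤ² ⋊_A ℤ into (ℝ³, ⋆); that is, ψ((v,l)·(v',l')) = ψ(v,l) ⋆ ψ(v',l') for all (v,l), (v',l'), and ψ is injective. -/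
/-- The solvable group multiplication on ℝ³:
`(x,y,z)⋆(x',y',z') = (x + eᶻx', y + e⁻ᶻy', z + z')`. -/
noncomputable def solMul (a b : ℝ × ℝ × ℝ) : ℝ × ℝ × ℝ :=
  (a.1 + Real.exp a.2.2 * b.1, a.2.1 + Real.exp (-a.2.2) * b.2.1, a.2.2 + b.2.2)

/-- The semidirect product multiplication on `ℤ² × ℤ` twisted by an invertible
integer matrix `A`: `(v,l)·(v',l') = (v + Aˡv', l + l')`. -/
def sdMul (A : (Matrix (Fin 2) (Fin 2) ℤ)ˣ) (p q : (Fin 2 → ℤ) × ℤ) :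
    (Fin 2 → ℤ) × ℤ :=
  (p.1 + ((A ^ p.2 : (Matrix (Fin 2) (Fin 2) ℤ)ˣ) : Matrix (Fin 2) (Fin 2) ℤ).mulVec q.1,
   p.2 + q.2)

/-- The map `ψ(v,l) = ((P·v)₁, (P·v)₂, l·log λ)` from `ℤ² ⋊_A ℤ` to Sol. -/
noncomputable def psiSol (P : Matrix (Fin 2) (Fin 2) ℝ) (lam : ℝ)
    (p : (Fin 2 → ℤ) × ℤ) : ℝ × ℝ × ℝ :=
  (P.mulVec (fun i => ((p.1 i : ℤ) : ℝ)) 0,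
   P.mulVec (fun i => ((p.1 i : ℤ) : ℝ)) 1,
   (p.2 : ℝ) * Real.log lam)

/-!
The relation `P * A = D * P` with `D = diag(λ, λ⁻¹)` says that `P` intertwines `A` with `D`, hence
`A ^ l` with `D ^ l = diag(λ ^ l, λ ^ (-l))` for every integer `l`. Since `λ ^ l = exp (l * log λ)`,
`D ^ l` is exactly the matrix by which the height `l * log λ` acts on the plane in Sol, so `ψ` is
multiplicative.
-/

section Intertwining

open scoped Matrix

variable {m n R S : Type*} [Fintype n]

theorem det_eq_det_of_mul_eq_mul [DecidableEq n] [CommRing R] {P A B : Matrix n n R}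
    (hP : IsUnit P) (h : P * A = B * P) : A.det = B.det := by
  have hdet : P.det * A.det = P.det * B.det := by
    rw [← Matrix.det_mul, h, Matrix.det_mul, mul_comm]
  exact ((Matrix.isUnit_iff_isUnit_det P).1 hP).mul_left_cancel hdet

theorem mulVec_map_add_mulVec [Fintype m] [Semiring R] [Semiring S] (f : R →+* S)
    {P : Matrix m n S} {A : Matrix n n R} {D : Matrix m m S} (h : P * A.map f = D * P)
    (v w : n → R) :
    P *ᵥ (f ∘ (v + A *ᵥ w)) = P *ᵥ (f ∘ v) + D *ᵥ (P *ᵥ (f ∘ w)) := by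
  have hmap : f ∘ (v + A *ᵥ w) = f ∘ v + A.map f *ᵥ (f ∘ w) := by
    funext i
    simp only [Function.comp_apply, Pi.add_apply, map_add, RingHom.map_mulVec]
  rw [hmap, Matrix.mulVec_add, Matrix.mulVec_mulVec, h, ← Matrix.mulVec_mulVec]

theorem mul_map_zpow_eq_diagonal_zpow_mul [DecidableEq n] [Semiring R] [DivisionSemiring S]
    (f : R →+* S) {P : Matrix n n S} {A : (Matrix n n R)ˣ} {d : n → S} (hd : ∀ i, d i ≠ 0)
    (h : P * (A : Matrix n n R).map f = Matrix.diagonal d * P) (l : ℤ) :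
    P * ((A ^ l : (Matrix n n R)ˣ) : Matrix n n R).map f = Matrix.diagonal (d ^ l) * P := by
  let φ : (Matrix n n R)ˣ →* (Matrix n n S)ˣ := Units.map (f.mapMatrix (m := n)).toMonoidHom
  let δ : (n → Sˣ) →* (Matrix n n S)ˣ :=
    (Units.map (Matrix.diagonalRingHom n S).toMonoidHom).comp
      MulEquiv.piUnits.symm.toMonoidHom
  let u : n → Sˣ := fun i => Units.mk0 (d i) (hd i)
  have hsemi : SemiconjBy P (φ A : Matrix n n S) (δ u) := h
  have hsemi_zpow : SemiconjBy P (φ (A ^ l) : Matrix n n S) (δ (u ^ l)) := by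
    simpa only [map_zpow] using hsemi.units_zpow_right l
  have hδ : (δ (u ^ l) : Matrix n n S) = Matrix.diagonal (d ^ l) :=
    congrArg Matrix.diagonal (funext fun i => Units.val_zpow_eq_zpow_val (u i) l)
  exact hδ ▸ hsemi_zpow

theorem det_eq_one_of_mul_map_eq_diagonal_mul [CommRing R] [Field S] {f : R →+* S}
    (hf : Function.Injective f) {A : Matrix (Fin 2) (Fin 2) R} {P : Matrix (Fin 2) (Fin 2) S}
    (hP : IsUnit P) {c : S} (hc : c ≠ 0) (h : P * A.map f = Matrix.diagonal ![c, c⁻¹] * P) :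
    A.det = 1 := by
  apply hf
  calc f A.det = (A.map f).det := f.map_det A
    _ = (Matrix.diagonal ![c, c⁻¹]).det := det_eq_det_of_mul_eq_mul hP h
    _ = c * c⁻¹ := by simp only [Matrix.det_diagonal, Fin.prod_univ_two, Matrix.cons_val_zero,
        Matrix.cons_val_one]
    _ = f 1 := by rw [mul_inv_cancel₀ hc, map_one]

end Intertwining

section PsiSol

open scoped Matrix

variable {A : (Matrix (Fin 2) (Fin 2) ℤ)ˣ} {P : Matrix (Fin 2) (Fin 2) ℝ} {lam : ℝ}

theorem psiSol_sdMul (hlam : 0 < lam)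
    (hrel : P * (A : Matrix (Fin 2) (Fin 2) ℤ).map (Int.cast : ℤ → ℝ) =
      Matrix.diagonal ![lam, lam⁻¹] * P) (p q : (Fin 2 → ℤ) × ℤ) :
    psiSol P lam (sdMul A p q) = solMul (psiSol P lam p) (psiSol P lam q) := by
  obtain ⟨v, l⟩ := p
  obtain ⟨w, k⟩ := q
  have hd : ∀ i, ![lam, lam⁻¹] i ≠ 0 :=
    Fin.forall_fin_two.2 ⟨hlam.ne', inv_ne_zero hlam.ne'⟩
  have hvec := mulVec_map_add_mulVec (Int.castRingHom ℝ)
    (mul_map_zpow_eq_diagonal_zpow_mul (Int.castRingHom ℝ) hd hrel l) v w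
  have hexp : Real.exp (l * Real.log lam) = lam ^ l := by
    rw [← Real.log_zpow, Real.exp_log (zpow_pos hlam l)]
  refine Prod.ext ?_ (Prod.ext ?_ ?_)
  · refine (congrFun hvec 0).trans ?_
    simp [psiSol, solMul, hexp, Function.comp_def]
  · refine (congrFun hvec 1).trans ?_
    simp [psiSol, solMul, Real.exp_neg, hexp, Function.comp_def]
  · simp only [psiSol, sdMul, solMul, Int.cast_add, add_mul]

theorem psiSol_injective (hP : Function.Injective P.mulVec) (hlog : Real.log lam ≠ 0) :
    Function.Injective (psiSol P lam) := by
  rintro ⟨v, l⟩ ⟨w, k⟩ h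
  simp only [psiSol, Prod.mk.injEq] at h
  obtain ⟨h₀, h₁, hlk⟩ := h
  have hvw : (Int.cast ∘ v : Fin 2 → ℝ) = Int.cast ∘ w :=
    hP (funext (Fin.forall_fin_two.2 ⟨h₀, h₁⟩))
  exact Prod.ext (Int.cast_injective.comp_left hvw)
    (Int.cast_injective (mul_right_cancel₀ hlog hlk))

end PsiSol

theorem lattice_embedding_into_sol_general
    (A : (Matrix (Fin 2) (Fin 2) ℤ)ˣ)
    (P : Matrix (Fin 2) (Fin 2) ℝ) (hP : IsUnit P)
    (lam : ℝ) (hlam : 0 < lam) (hlam_ne_one : lam ≠ 1)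
    (hrel : P * ((A : Matrix (Fin 2) (Fin 2) ℤ).map (Int.cast : ℤ → ℝ)) =
      Matrix.diagonal ![lam, lam⁻¹] * P) :
    (A : Matrix (Fin 2) (Fin 2) ℤ).det = 1 ∧
    (∀ p q : (Fin 2 → ℤ) × ℤ,
      psiSol P lam (sdMul A p q) = solMul (psiSol P lam p) (psiSol P lam q)) ∧
    Function.Injective (psiSol P lam) :=
  ⟨det_eq_one_of_mul_map_eq_diagonal_mul (f := Int.castRingHom ℝ) Int.cast_injective hP hlam.ne'
      hrel,
    psiSol_sdMul hlam hrel,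
    psiSol_injective (Matrix.mulVec_injective_of_isUnit hP)
      (Real.log_ne_zero_of_pos_of_ne_one hlam hlam_ne_one)⟩

/-- If `P·A = diag(λ, λ⁻¹)·P` with `P` invertible and `λ > 1`, then `det A = 1` and
`ψ(v,l) = (P·v, l·log λ)` is an injective group homomorphism from the semidirect
product `ℤ² ⋊_A ℤ` into `(ℝ³, ⋆) = Sol`. -/
theorem lattice_embedding_into_sol
    (A : (Matrix (Fin 2) (Fin 2) ℤ)ˣ)
    (P : Matrix (Fin 2) (Fin 2) ℝ) (hP : IsUnit P)
    (lam : ℝ) (hlam : 1 < lam)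
    (hrel : P * ((A : Matrix (Fin 2) (Fin 2) ℤ).map (Int.cast : ℤ → ℝ)) =
      Matrix.diagonal ![lam, lam⁻¹] * P) :
    (A : Matrix (Fin 2) (Fin 2) ℤ).det = 1 ∧
    (∀ p q : (Fin 2 → ℤ) × ℤ,
      psiSol P lam (sdMul A p q) = solMul (psiSol P lam p) (psiSol P lam q)) ∧
    Function.Injective (psiSol P lam) :=
  lattice_embedding_into_sol_general A P hP lam (zero_lt_one.trans hlam) hlam.ne' hrel
end

section
/- Consider differentiable functions M_x, M_y, M_z : ℝ → ℝ satisfying the reduced ODE system: M_x' = M_x M_z, M_y' = −M_y M_z, M_z' = M_y² − M_x(M_x + 1). Suppose there is T > 0 such that M_x, M_y, M_z are all T-periodic, that M_x(0)·M_y(0) = 0, and that (M_x(0) + 1)² + M_y(0)² + M_z(0)² = 1. Then M_x(t) = 0, M_y(t) = 0 and M_z(t) = 0 for all t ∈ ℝ. -/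
/-!
Since `M_x` and `M_y` solve scalar linear equations, each of them vanishes identically as soon as
it vanishes once. If `M_x ≡ 0`, conservation of energy reads `1 + M_y² + M_z² = 1`. Otherwise
`M_y ≡ 0` and `M_x` never vanishes, so the orbit stays on the circle `(M_x + 1)² + M_z² = 1` minus
the origin; it is homoclinic to the origin, and the slope `M_z / M_x` parametrises it injectively,
since its derivative is `1`.
-/

lemma eq_of_forall_hasDerivAt_zero {𝕜 E : Type*} [RCLike 𝕜] [NormedAddCommGroup E]
    [NormedSpace 𝕜 E] {f : 𝕜 → E} (hf : ∀ t, HasDerivAt f 0 t) (s t : 𝕜) : f s = f t :=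
  is_const_of_deriv_eq_zero (fun r ↦ (hf r).differentiableAt) (fun r ↦ (hf r).deriv) s t

section LinearODE

variable {E : Type*} [NormedAddCommGroup E] [NormedSpace ℝ E] {f : ℝ → E} {a : ℝ → ℝ}

lemma eq_exp_integral_smul_of_hasDerivAt (ha : Continuous a)
    (hf : ∀ t, HasDerivAt f (a t • f t) t) (s t : ℝ) :
    f t = Real.exp (∫ u in s..t, a u) • f s := by
  have hderiv (r : ℝ) :
      HasDerivAt (fun r ↦ Real.exp (-∫ u in s..r, a u) • f r) 0 r := by
    have hexp := (ha.integral_hasStrictDerivAt s r).hasDerivAt.fun_neg.exp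
    exact (hexp.fun_smul (hf r)).congr_deriv (by module)
  have hconst : Real.exp (-∫ u in s..t, a u) • f t = f s := by
    simpa using eq_of_forall_hasDerivAt_zero hderiv t s
  rw [← hconst, smul_smul, ← Real.exp_add, add_neg_cancel, Real.exp_zero, one_smul]

lemma eq_zero_iff_of_hasDerivAt_smul (ha : Continuous a)
    (hf : ∀ t, HasDerivAt f (a t • f t) t) (s t : ℝ) : f t = 0 ↔ f s = 0 := by
  simp [eq_exp_integral_smul_of_hasDerivAt ha hf s t, Real.exp_ne_zero]

end LinearODE

/-- Solutions of the reduced Hamiltonian system on `Sol` for the left-invariant momenta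
`M_x = e^z p_x`, `M_y = e^{-z} p_y`, `M_z = p_z`, where `2H = (M_x + 1)² + M_y² + M_z²`. Only
solutions defined for all times are considered. -/
structure IsSolMomentumCurve (Mx My Mz : ℝ → ℝ) : Prop where
  hasDerivAt_x (t : ℝ) : HasDerivAt Mx (Mx t * Mz t) t
  hasDerivAt_y (t : ℝ) : HasDerivAt My (-(My t * Mz t)) t
  hasDerivAt_z (t : ℝ) : HasDerivAt Mz (My t ^ 2 - Mx t * (Mx t + 1)) t

namespace IsSolMomentumCurve

variable {Mx My Mz : ℝ → ℝ}

lemma energy_eq (h : IsSolMomentumCurve Mx My Mz) (s t : ℝ) :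
    (Mx s + 1) ^ 2 + My s ^ 2 + Mz s ^ 2 = (Mx t + 1) ^ 2 + My t ^ 2 + Mz t ^ 2 := by
  have hderiv (r : ℝ) : HasDerivAt (fun r ↦ (Mx r + 1) ^ 2 + My r ^ 2 + Mz r ^ 2) 0 r := by
    have hx := ((h.hasDerivAt_x r).add_const 1).fun_pow 2
    have hy := (h.hasDerivAt_y r).fun_pow 2
    have hz := (h.hasDerivAt_z r).fun_pow 2
    exact ((hx.fun_add hy).fun_add hz).congr_deriv (by push_cast; ring)
  exact eq_of_forall_hasDerivAt_zero hderiv s t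

lemma continuous_z (h : IsSolMomentumCurve Mx My Mz) : Continuous Mz :=
  continuous_iff_continuousAt.2 fun t ↦ (h.hasDerivAt_z t).continuousAt

lemma x_eq_zero_iff (h : IsSolMomentumCurve Mx My Mz) (s t : ℝ) : Mx t = 0 ↔ Mx s = 0 :=
  eq_zero_iff_of_hasDerivAt_smul h.continuous_z
    (fun r ↦ (h.hasDerivAt_x r).congr_deriv (mul_comm _ _)) s t

lemma y_eq_zero_iff (h : IsSolMomentumCurve Mx My Mz) (s t : ℝ) : My t = 0 ↔ My s = 0 :=
  eq_zero_iff_of_hasDerivAt_smul h.continuous_z.neg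
    (fun r ↦ (h.hasDerivAt_y r).congr_deriv (by simp [mul_comm])) s t

lemma eq_zero_of_x_eq_zero (h : IsSolMomentumCurve Mx My Mz) {s : ℝ} (hx : Mx s = 0)
    (hE : (Mx s + 1) ^ 2 + My s ^ 2 + Mz s ^ 2 = 1) (t : ℝ) :
    Mx t = 0 ∧ My t = 0 ∧ Mz t = 0 := by
  have hxt : Mx t = 0 := (h.x_eq_zero_iff s t).2 hx
  have hEt := (h.energy_eq t s).trans hE
  have hyz : My t ^ 2 + Mz t ^ 2 = 0 := by
    rw [hxt] at hEt
    linarith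
  rw [add_eq_zero_iff_of_nonneg (sq_nonneg _) (sq_nonneg _)] at hyz
  exact ⟨hxt, sq_eq_zero_iff.1 hyz.1, sq_eq_zero_iff.1 hyz.2⟩

lemma hasDerivAt_z_div_x (h : IsSolMomentumCurve Mx My Mz) {t : ℝ} (hx : Mx t ≠ 0)
    (hE : (Mx t + 1) ^ 2 + My t ^ 2 + Mz t ^ 2 = 1) :
    HasDerivAt (fun r ↦ Mz r / Mx r) (1 + 2 * My t ^ 2 / Mx t) t := by
  refine ((h.hasDerivAt_z t).fun_div (h.hasDerivAt_x t) hx).congr_deriv ?_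
  field_simp
  linear_combination -hE

lemma strictMono_z_div_x (h : IsSolMomentumCurve Mx My Mz) {s : ℝ} (hx : Mx s ≠ 0)
    (hy : My s = 0) (hE : (Mx s + 1) ^ 2 + My s ^ 2 + Mz s ^ 2 = 1) :
    StrictMono fun t ↦ Mz t / Mx t := by
  refine strictMono_of_hasDerivAt_pos (f' := fun _ ↦ 1) (fun t ↦ ?_) fun _ ↦ one_pos
  have hxt : Mx t ≠ 0 := (h.x_eq_zero_iff s t).not.2 hx
  have hyt : My t = 0 := (h.y_eq_zero_iff s t).2 hy
  simpa [hyt] using h.hasDerivAt_z_div_x hxt ((h.energy_eq t s).trans hE)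

end IsSolMomentumCurve

theorem sol_periodic_orbit_m_zero_is_equilibrium_general {Mx My Mz : ℝ → ℝ}
    (h : IsSolMomentumCurve Mx My Mz) {s : ℝ} (hm : Mx s * My s = 0)
    (hE : (Mx s + 1) ^ 2 + My s ^ 2 + Mz s ^ 2 = 1)
    (hninj : ¬ Function.Injective fun t ↦ (Mx t, Mz t)) (t : ℝ) :
    Mx t = 0 ∧ My t = 0 ∧ Mz t = 0 := by
  have hx : Mx s = 0 := by
    by_contra hx
    have hy : My s = 0 := (mul_eq_zero.1 hm).resolve_left hx
    have hslope : Function.Injective ((fun p : ℝ × ℝ ↦ p.2 / p.1) ∘ fun t ↦ (Mx t, Mz t)) :=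
      (h.strictMono_z_div_x hx hy hE).injective
    exact hninj hslope.of_comp
  exact h.eq_zero_of_x_eq_zero hx hE t

/-- For a `T`-periodic solution of the reduced system `M_x' = M_x M_z`,
`M_y' = -M_y M_z`, `M_z' = M_y² - M_x(M_x+1)` lying on the critical energy level
`(M_x+1)² + M_y² + M_z² = 1` and with `M_x(0)·M_y(0) = 0`, the solution is the
equilibrium `M_x ≡ M_y ≡ M_z ≡ 0`. -/
theorem sol_periodic_orbit_m_zero_is_equilibrium
    (Mx My Mz : ℝ → ℝ)
    (hMx : ∀ t : ℝ, HasDerivAt Mx (Mx t * Mz t) t)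
    (hMy : ∀ t : ℝ, HasDerivAt My (-(My t * Mz t)) t)
    (hMz : ∀ t : ℝ, HasDerivAt Mz (My t ^ 2 - Mx t * (Mx t + 1)) t)
    (T : ℝ) (hT : 0 < T)
    (hMxper : ∀ t : ℝ, Mx (t + T) = Mx t)
    (hMyper : ∀ t : ℝ, My (t + T) = My t)
    (hMzper : ∀ t : ℝ, Mz (t + T) = Mz t)
    (hm : Mx 0 * My 0 = 0)
    (hE : (Mx 0 + 1) ^ 2 + My 0 ^ 2 + Mz 0 ^ 2 = 1) :
    ∀ t : ℝ, Mx t = 0 ∧ My t = 0 ∧ Mz t = 0 := by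
  refine sol_periodic_orbit_m_zero_is_equilibrium_general ⟨hMx, hMy, hMz⟩ hm hE fun hinj ↦ ?_
  exact hT.ne' (by simpa using hinj (Prod.ext (hMxper 0) (hMzper 0)))
end

section
/- Consider differentiable functions M_x, M_y, M_z : ℝ → ℝ satisfying the reduced ODE system: M_x' = M_x M_z, M_y' = −M_y M_z, M_z' = M_y² − M_x(M_x + 1). Suppose there is T > 0 such that M_x, M_y, M_z are all T-periodic, and that (M_x(0) + 1)² + M_y(0)² + M_z(0)² = 1. Then ∫₀ᵀ M_z(t) dt = 0. -/
/-!
The equation for `M_x` integrates to `M_x(T) = exp(∫₀ᵀ M_z) M_x(0)`, so `M_x(T) = M_x(0) ≠ 0` forces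
the integral to vanish. The remaining orbits start on the plane `M_x = 0`, which meets the ball
bounded by the critical energy sphere only at the origin, an equilibrium.
-/

section LinearEquation

open Real

variable {E : Type*} [NormedAddCommGroup E] [NormedSpace ℝ E] {f : ℝ → E} {g : ℝ → ℝ}

theorem eq_exp_integral_smul_of_hasDerivAt_smul (hg : Continuous g)
    (hf : ∀ t, HasDerivAt f (g t • f t) t) (a t : ℝ) :
    f t = exp (∫ s in a..t, g s) • f a := by
  let G : ℝ → ℝ := fun u ↦ ∫ s in a..u, g s
  have hG (u : ℝ) : HasDerivAt G (g u) u := (hg.integral_hasStrictDerivAt a u).hasDerivAt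
  have h_deriv (u : ℝ) : HasDerivAt (fun v ↦ exp (-G v) • f v) 0 u :=
    ((hG u).fun_neg.exp.fun_smul (hf u)).congr_deriv (by module)
  have h_const : exp (-G t) • f t = f a := by
    simpa [G] using is_const_of_deriv_eq_zero (fun u ↦ (h_deriv u).differentiableAt)
      (fun u ↦ (h_deriv u).deriv) t a
  rw [← h_const, smul_smul, ← exp_add, add_neg_cancel, exp_zero, one_smul]

theorem integral_eq_zero_of_hasDerivAt_smul (hg : Continuous g)
    (hf : ∀ t, HasDerivAt f (g t • f t) t) {a b : ℝ} (ha : f a ≠ 0) (hab : f b = f a) :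
    ∫ t in a..b, g t = 0 := by
  have h_smul : exp (∫ t in a..b, g t) • f a = (1 : ℝ) • f a := by
    rw [← eq_exp_integral_smul_of_hasDerivAt_smul hg hf, hab, one_smul]
  exact (exp_eq_one_iff _).1 (smul_left_injective ℝ ha h_smul)

end LinearEquation

/-- `Mx`, `My`, `Mz` solve, for all times, the reduced system (XH) satisfied by the left-invariant
momenta along an orbit on `T*Sol`; the energy level is left free. -/
structure IsSolReducedSolution (Mx My Mz : ℝ → ℝ) : Prop where
  hasDerivAt_Mx (t : ℝ) : HasDerivAt Mx (Mx t * Mz t) t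
  hasDerivAt_My (t : ℝ) : HasDerivAt My (-(My t * Mz t)) t
  hasDerivAt_Mz (t : ℝ) : HasDerivAt Mz (My t ^ 2 - Mx t * (Mx t + 1)) t

namespace IsSolReducedSolution

variable {Mx My Mz : ℝ → ℝ}

theorem continuous_Mz (h : IsSolReducedSolution Mx My Mz) : Continuous Mz :=
  continuous_iff_continuousAt.2 fun t ↦ (h.hasDerivAt_Mz t).continuousAt

theorem hasDerivAt_Mx_smul (h : IsSolReducedSolution Mx My Mz) (t : ℝ) :
    HasDerivAt Mx (Mz t • Mx t) t :=
  (h.hasDerivAt_Mx t).congr_deriv (mul_comm _ _)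

theorem hasDerivAt_My_smul (h : IsSolReducedSolution Mx My Mz) (t : ℝ) :
    HasDerivAt My (-Mz t • My t) t :=
  (h.hasDerivAt_My t).congr_deriv (by rw [smul_eq_mul]; ring)

theorem Mx_eq_zero (h : IsSolReducedSolution Mx My Mz) {a : ℝ} (ha : Mx a = 0) (t : ℝ) :
    Mx t = 0 := by
  rw [eq_exp_integral_smul_of_hasDerivAt_smul h.continuous_Mz h.hasDerivAt_Mx_smul a t, ha,
    smul_zero]

theorem My_eq_zero (h : IsSolReducedSolution Mx My Mz) {a : ℝ} (ha : My a = 0) (t : ℝ) :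
    My t = 0 := by
  rw [eq_exp_integral_smul_of_hasDerivAt_smul h.continuous_Mz.neg h.hasDerivAt_My_smul a t, ha,
    smul_zero]

theorem Mz_eq_of_Mx_eq_zero_of_My_eq_zero (h : IsSolReducedSolution Mx My Mz)
    {a : ℝ} (hx : Mx a = 0) (hy : My a = 0) (t : ℝ) : Mz t = Mz a := by
  refine is_const_of_deriv_eq_zero (fun u ↦ (h.hasDerivAt_Mz u).differentiableAt) (fun u ↦ ?_) t a
  rw [(h.hasDerivAt_Mz u).deriv, h.Mx_eq_zero hx, h.My_eq_zero hy]
  ring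

end IsSolReducedSolution

theorem sol_critical_periodic_orbit_integral_vanishes_general {Mx My Mz : ℝ → ℝ}
    (h : IsSolReducedSolution Mx My Mz) {a b : ℝ} (hab : Mx b = Mx a)
    (hE : (Mx a + 1) ^ 2 + My a ^ 2 + Mz a ^ 2 ≤ 1) :
    ∫ t in a..b, Mz t = 0 := by
  by_cases hx : Mx a = 0
  · have h_sq : My a ^ 2 + Mz a ^ 2 ≤ 0 := by
      rw [hx] at hE
      linarith
    have hy : My a = 0 := sq_nonpos_iff _ |>.1 <| (le_add_of_nonneg_right (sq_nonneg _)).trans h_sq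
    have hz : Mz a = 0 := sq_nonpos_iff _ |>.1 <| (le_add_of_nonneg_left (sq_nonneg _)).trans h_sq
    have hz_zero (t : ℝ) : Mz t = 0 := (h.Mz_eq_of_Mx_eq_zero_of_My_eq_zero hx hy t).trans hz
    simp [hz_zero]
  · exact integral_eq_zero_of_hasDerivAt_smul h.continuous_Mz h.hasDerivAt_Mx_smul hx hab

/-- The Claim of the paper: for any `T`-periodic solution of the reduced system
`M_x' = M_x M_z`, `M_y' = -M_y M_z`, `M_z' = M_y² - M_x(M_x+1)` lying on the Mañé
critical energy level `(M_x+1)² + M_y² + M_z² = 1`, the integral of `M_z` over a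
period vanishes; hence every closed orbit on the critical level is homologous to
zero in Γ\Sol. -/
theorem sol_critical_periodic_orbit_integral_vanishes
    (Mx My Mz : ℝ → ℝ)
    (hMx : ∀ t : ℝ, HasDerivAt Mx (Mx t * Mz t) t)
    (hMy : ∀ t : ℝ, HasDerivAt My (-(My t * Mz t)) t)
    (hMz : ∀ t : ℝ, HasDerivAt Mz (My t ^ 2 - Mx t * (Mx t + 1)) t)
    (T : ℝ) (hT : 0 < T)
    (hMxper : ∀ t : ℝ, Mx (t + T) = Mx t)
    (hMyper : ∀ t : ℝ, My (t + T) = My t)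
    (hMzper : ∀ t : ℝ, Mz (t + T) = Mz t)
    (hE : (Mx 0 + 1) ^ 2 + My 0 ^ 2 + Mz 0 ^ 2 = 1) :
    ∫ t in (0 : ℝ)..T, Mz t = 0 := by
  exact sol_critical_periodic_orbit_integral_vanishes_general ⟨hMx, hMy, hMz⟩
    (by simpa using hMxper 0) hE.le
end
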